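/- Let Ω be a bounded domain in ℂⁿ and K ⊂ Ω a compact complete pluripolar set. Then the relative extremal function u_K of K in Ω, defined as the supremum of all continuous plurisubharmonic functions u on Ω with u < 1 on Ω and u ≤ 0 on K, equals the characteristic function of Ω \ K. -/

import Mathlib

open Complex Topology Filter Metric MeasureTheory Set

noncomputable section

/-- Subharmonicity on a subset of `ℂ`: upper semicontinuity together with
majorization by real parts of holomorphic polynomials on closed discs
(the classical harmonic-majorant characterization). -/
def SubharmonicOn (u : ℂ → EReal) (s : Set ℂ) : Prop :=
  UpperSemicontinuousOn u s ∧
  ∀ (c : ℂ) (r : ℝ), 0 < r → Metric.closedBall c r ⊆ s →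
    ∀ p : Polynomial ℂ,
      (∀ z ∈ Metric.sphere c r, u z ≤ ((p.eval z).re : EReal)) →
      ∀ z ∈ Metric.closedBall c r, u z ≤ ((p.eval z).re : EReal)

/-- Plurisubharmonicity on a subset of a complex normed space:
upper semicontinuity and subharmonicity along every complex line. -/
def PlurisubharmonicOn {E : Type*} [NormedAddCommGroup E] [NormedSpace ℂ E]
    (u : E → EReal) (Ω : Set E) : Prop :=
  UpperSemicontinuousOn u Ω ∧
  ∀ z w : E, SubharmonicOn (fun t : ℂ => u (z + t • w)) {t : ℂ | z + t • w ∈ Ω}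

/-- A function is pluriharmonic on `Ω` if it is locally the real part of
a holomorphic function. -/
def PluriharmonicOn {E : Type*} [NormedAddCommGroup E] [NormedSpace ℂ E]
    (h : E → ℝ) (Ω : Set E) : Prop :=
  ∀ z ∈ Ω, ∃ U : Set E, IsOpen U ∧ z ∈ U ∧ U ⊆ Ω ∧
    ∃ f : E → ℂ, DifferentiableOn ℂ f U ∧ ∀ w ∈ U, h w = (f w).re

/-- `K` is complete pluripolar in `S`: every point of `K` has a neighborhood
`U ⊆ S` and a plurisubharmonic function `φ` on `U` with `K ∩ U = φ⁻¹(-∞)`. -/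
def CompletePluripolarIn {E : Type*} [NormedAddCommGroup E] [NormedSpace ℂ E]
    (K S : Set E) : Prop :=
  ∀ z ∈ K, ∃ U : Set E, IsOpen U ∧ z ∈ U ∧ U ⊆ S ∧
    ∃ φ : E → EReal, PlurisubharmonicOn φ U ∧ K ∩ U = {w ∈ U | φ w = ⊥}

/-- The Levi form of a real-valued function `φ` at `z` in the complex direction `v`:
`∂∂̄φ(z)(v,v̄)`, computed as one quarter of the Laplacian of `t ↦ φ (z + t v)` at `t = 0`. -/
def leviForm {E : Type*} [NormedAddCommGroup E] [NormedSpace ℂ E]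
    (φ : E → ℝ) (z v : E) : ℝ :=
  (1/4) * ((iteratedFDeriv ℝ 2 (fun t : ℂ => φ (z + t • v)) 0) ![1, 1]
        + (iteratedFDeriv ℝ 2 (fun t : ℂ => φ (z + t • v)) 0) ![Complex.I, Complex.I])

/-- The Wirtinger derivative `∂φ(z)(v) = Σ vⱼ ∂φ/∂zⱼ` of a real-valued function
in the complex direction `v`. -/
def wirtDeriv {E : Type*} [NormedAddCommGroup E] [NormedSpace ℂ E]
    (φ : E → ℝ) (z v : E) : ℂ :=
  (1/2 : ℂ) * ((fderiv ℝ φ z v : ℝ) - Complex.I * ((fderiv ℝ φ z (Complex.I • v) : ℝ) : ℂ))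

end

open Classical

/-!
It suffices to find competitors tending to `1` at a given point off `K`. Near a point of `K`, a
local function with pole set `K` is truncated at a negative level and regularized by convolving it,
in the sup sense, with a cone; this keeps it plurisubharmonic and gives continuous local functions
that are very negative on `K` but moderate off `K`. Repeating the step `v i ↦ max (s i) (v i - 1)`,
where all `v i` are at least `-1` off a neighbourhood of `K` on which all `s i` lie below the floor
of `v i - 1`, produces local functions of depth `k` on the balls of a finite cover whose mutual
differences are at most `2`, whatever `k` is. As `‖x‖ ^ 2 - ‖x - a‖ ^ 2` is pluriharmonic, quadratic
penalties glue them into one plurisubharmonic function at a cost independent of `k`. Dividing by `k`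
makes that cost negligible.
-/

section Disc

lemma le_re_eval_of_le_sphere {p : Polynomial ℂ} {c : ℂ} {r b : ℝ} (hr : 0 < r)
    (h : ∀ z ∈ sphere c r, b ≤ (p.eval z).re) : ∀ z ∈ closedBall c r, b ≤ (p.eval z).re := by
  intro z hz
  have hbound : ∀ x ∈ frontier (ball c r), ‖exp (-p.eval x)‖ ≤ Real.exp (-b) := by
    intro x hx
    rw [frontier_ball c hr.ne'] at hx
    simpa [norm_exp] using h x hx
  have hmax := norm_le_of_forall_mem_frontier_norm_le isBounded_ball
    (p.differentiable.neg.cexp.diffContOnCl) hbound (by rwa [closure_ball c hr.ne'] : z ∈ _)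
  simpa [norm_exp] using hmax

lemma exists_isMaxOn_add_norm_sq_mem_ball {E : Type*} [SeminormedAddCommGroup E] [ProperSpace E]
    {h : E → ℝ} {c z : E} {r : ℝ} (hh : ContinuousOn h (closedBall c r))
    (hsphere : ∀ x ∈ sphere c r, h x ≤ 0) (hz : z ∈ closedBall c r) (hpos : 0 < h z) :
    ∃ ε > 0, ∃ a ∈ ball c r, IsMaxOn (fun x => h x + ε * ‖x - c‖ ^ 2) (closedBall c r) a := by
  set ε := h z / (2 * (r ^ 2 + 1))
  have hε : 0 < ε := by positivity
  have hεr : ε * r ^ 2 < h z := by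
    rw [div_mul_eq_mul_div, div_lt_iff₀ (by positivity)]
    nlinarith [sq_nonneg r]
  have hcont : ContinuousOn (fun x => h x + ε * ‖x - c‖ ^ 2) (closedBall c r) :=
    hh.add (by fun_prop)
  obtain ⟨a, ha, hmax⟩ := (isCompact_closedBall c r).exists_isMaxOn ⟨z, hz⟩ hcont
  refine ⟨ε, hε, a, (mem_closedBall.1 ha).lt_of_ne fun hsph => ?_, hmax⟩
  have hza : h z + ε * ‖z - c‖ ^ 2 ≤ h a + ε * ‖a - c‖ ^ 2 := isMaxOn_iff.1 hmax z hz
  rw [← dist_eq_norm a, hsph] at hza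
  linarith [hsphere a hsph, mul_nonneg hε.le (sq_nonneg ‖z - c‖)]

lemma exists_polynomial_re_eq_norm_sq_sub (a c : ℂ) :
    ∃ q : Polynomial ℂ, ∀ z, (q.eval z).re = ‖z - c‖ ^ 2 - ‖z - a‖ ^ 2 := by
  refine ⟨.C (2 * (starRingEnd ℂ) (a - c)) * .X + .C ((‖c‖ ^ 2 - ‖a‖ ^ 2 : ℝ) : ℂ), fun z => ?_⟩
  simp only [Polynomial.eval_add, Polynomial.eval_mul, Polynomial.eval_C, Polynomial.eval_X,
    ← normSq_eq_norm_sq, normSq_apply, add_re, mul_re, mul_im, sub_re, sub_im, conj_re, conj_im,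
    ofReal_re, re_ofNat, im_ofNat]
  ring

lemma le_re_eval_of_eventually_small_circles {u : ℂ → ℝ} {c : ℂ} {r : ℝ}
    (hu : ContinuousOn u (closedBall c r))
    (hloc : ∀ a ∈ ball c r, ∀ᶠ ρ in 𝓝[>] (0 : ℝ), ∀ p : Polynomial ℂ,
      (∀ z ∈ sphere a ρ, u z ≤ (p.eval z).re) → u a ≤ (p.eval a).re)
    {p : Polynomial ℂ} (hp : ∀ z ∈ sphere c r, u z ≤ (p.eval z).re) :
    ∀ z ∈ closedBall c r, u z ≤ (p.eval z).re := by
  intro z₀ hz₀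
  by_contra! hlt
  obtain ⟨ε, hε, a, ha, hmax⟩ := exists_isMaxOn_add_norm_sq_mem_ball
    (h := fun z => u z - (p.eval z).re)
    (hu.sub (continuous_re.comp p.continuous).continuousOn)
    (fun z hz => sub_nonpos.2 (hp z hz)) hz₀ (sub_pos.2 hlt)
  obtain ⟨ρ, hρmaj, hρ, hρr⟩ := ((hloc a ha).and
    (Ioo_mem_nhdsGT (sub_pos.2 (mem_ball.1 ha)))).exists
  obtain ⟨q, hq⟩ := exists_polynomial_re_eq_norm_sq_sub a c
  set M := u a - (p.eval a).re + ε * ‖a - c‖ ^ 2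
  -- On the circle of radius `ρ` about `a`, the number `‖z - a‖ ^ 2` is the constant `ρ ^ 2`, so
  -- the non-harmonic bound `Re p - ε * ‖z - c‖ ^ 2 + M` agrees there with the real part of `P`.
  set P : Polynomial ℂ := p - .C (ε : ℂ) * q + .C ((M - ε * ρ ^ 2 : ℝ) : ℂ) with hP
  have hPre (z) : (P.eval z).re
      = (p.eval z).re - ε * (‖z - c‖ ^ 2 - ‖z - a‖ ^ 2) + (M - ε * ρ ^ 2) := by
    simp only [hP, Polynomial.eval_add, Polynomial.eval_sub, Polynomial.eval_mul,
      Polynomial.eval_C, add_re, sub_re, re_ofReal_mul, ofReal_re, hq]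
  have hcircle : ∀ z ∈ sphere a ρ, u z ≤ (P.eval z).re := by
    intro z hz
    have hzc : z ∈ closedBall c r := closedBall_subset_closedBall' (by linarith)
      (sphere_subset_closedBall hz)
    have hzM : u z - (p.eval z).re + ε * ‖z - c‖ ^ 2 ≤ M := isMaxOn_iff.1 hmax z hzc
    rw [hPre, mem_sphere_iff_norm.1 hz]
    linarith
  have hcentre := hρmaj P hcircle
  rw [hPre, sub_self, norm_zero] at hcentre
  linarith [mul_pos hε (pow_pos hρ 2)]

end Disc

/-- Subharmonicity of a real-valued function along the complex lines in `U`, without the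
semicontinuity requirement: for continuous functions this is plurisubharmonicity. -/
def LineSubharmonicOn {E : Type*} [NormedAddCommGroup E] [NormedSpace ℂ E]
    (f : E → ℝ) (U : Set E) : Prop :=
  ∀ (z w : E) (c : ℂ) (r : ℝ), 0 < r → (∀ t ∈ closedBall c r, z + t • w ∈ U) →
    ∀ p : Polynomial ℂ, (∀ t ∈ sphere c r, f (z + t • w) ≤ (p.eval t).re) →
      ∀ t ∈ closedBall c r, f (z + t • w) ≤ (p.eval t).re

section LineSubharmonic

variable {E : Type*} [NormedAddCommGroup E] [NormedSpace ℂ E] {f g : E → ℝ} {U V : Set E}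

lemma LineSubharmonicOn.plurisubharmonicOn (hf : LineSubharmonicOn f U)
    (hc : ContinuousOn f U) : PlurisubharmonicOn (fun x => (f x : EReal)) U := by
  have hc' : ContinuousOn (fun x => (f x : EReal)) U :=
    continuous_coe_real_ereal.comp_continuousOn hc
  refine ⟨hc'.upperSemicontinuousOn, fun z w => ⟨?_, fun c r hr hsub p hp => ?_⟩⟩
  · exact (hc'.comp (f := fun t : ℂ => z + t • w) (by fun_prop)
      fun _ ht => ht).upperSemicontinuousOn
  · simp only [EReal.coe_le_coe_iff] at hp ⊢
    exact hf z w c r hr hsub p hp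

lemma LineSubharmonicOn.mono (hf : LineSubharmonicOn f V) (hUV : U ⊆ V) :
    LineSubharmonicOn f U :=
  fun z w c r hr hU => hf z w c r hr fun t ht => hUV (hU t ht)

lemma lineSubharmonicOn_const (b : ℝ) (U : Set E) : LineSubharmonicOn (fun _ => b) U :=
  fun _ _ _ _ hr _ _ hp => le_re_eval_of_le_sphere hr hp

lemma LineSubharmonicOn.comp_add_right {v : E} (hf : LineSubharmonicOn f V)
    (hUV : ∀ x ∈ U, x + v ∈ V) : LineSubharmonicOn (fun x => f (x + v)) U := by
  intro z w c r hr hU p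
  have hline (t : ℂ) : z + t • w + v = z + v + t • w := by abel
  simp only [hline]
  exact hf (z + v) w c r hr (fun t ht => hline t ▸ hUV _ (hU t ht)) p

lemma LineSubharmonicOn.add_of_re_polynomial {h : E → ℝ} (hf : LineSubharmonicOn f U)
    (hh : ∀ z w, ∃ q : Polynomial ℂ, ∀ t, h (z + t • w) = (q.eval t).re) :
    LineSubharmonicOn (fun x => f x + h x) U := by
  intro z w c r hr hU p
  obtain ⟨q, hq⟩ := hh z w
  simpa only [Polynomial.eval_sub, sub_re, le_sub_iff_add_le, hq] using hf z w c r hr hU (p - q)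

lemma LineSubharmonicOn.add_const (hf : LineSubharmonicOn f U) (b : ℝ) :
    LineSubharmonicOn (fun x => f x + b) U :=
  hf.add_of_re_polynomial fun _ _ => ⟨.C (b : ℂ), by simp⟩

lemma LineSubharmonicOn.const_mul {a : ℝ} (ha : 0 < a) (hf : LineSubharmonicOn f U) :
    LineSubharmonicOn (fun x => a * f x) U := by
  intro z w c r hr hU p
  simpa only [Polynomial.eval_mul, Polynomial.eval_C, re_ofReal_mul, le_inv_mul_iff₀ ha]
    using hf z w c r hr hU (.C ((a⁻¹ : ℝ) : ℂ) * p)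

lemma LineSubharmonicOn.of_isLUB {ι : Type*} {F : ι → E → ℝ} (hF : ∀ i, LineSubharmonicOn (F i) U)
    (hf : ∀ x ∈ U, IsLUB (range fun i => F i x) (f x)) : LineSubharmonicOn f U := by
  intro z w c r hr hU p hp t ht
  refine (hf _ (hU t ht)).2 ?_
  rintro _ ⟨i, rfl⟩
  refine hF i z w c r hr hU p (fun s hs => ?_) t ht
  exact ((hf _ (hU s (sphere_subset_closedBall hs))).1 ⟨i, rfl⟩).trans (hp s hs)

lemma LineSubharmonicOn.max (hf : LineSubharmonicOn f U) (hg : LineSubharmonicOn g U) :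
    LineSubharmonicOn (fun x => max (f x) (g x)) U :=
  .of_isLUB (F := fun b : Bool => cond b g f) (Bool.rec hf hg) fun x _ =>
    ⟨by rintro _ ⟨_ | _, rfl⟩ <;> simp, fun _ hb => max_le (hb ⟨false, rfl⟩) (hb ⟨true, rfl⟩)⟩

lemma LineSubharmonicOn.of_supporting (hfc : ContinuousOn f U)
    (hf : ∀ x ∈ U, ∃ g, ∃ W ∈ 𝓝 x, LineSubharmonicOn g W ∧ (∀ y ∈ W, g y ≤ f y) ∧ g x = f x) :
    LineSubharmonicOn f U := by
  intro z w c r _ hU p hp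
  refine le_re_eval_of_eventually_small_circles (u := fun t => f (z + t • w))
    (hfc.comp (by fun_prop) hU) (fun a ha => ?_) hp
  obtain ⟨g, W, hW, hgW, hgf, hga⟩ := hf _ (hU a (ball_subset_closedBall ha))
  have hline : Tendsto (fun t : ℂ => z + t • w) (𝓝 a) (𝓝 (z + a • w)) :=
    Continuous.tendsto (by fun_prop) a
  filter_upwards [(eventually_closedBall_subset (hline hW)).filter_mono nhdsWithin_le_nhds,
    self_mem_nhdsWithin] with ρ hρW hρ q hq
  rw [← hga]
  exact hgW z w a ρ hρ (fun t ht => hρW ht) q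
    (fun t ht => (hgf _ (hρW (sphere_subset_closedBall ht))).trans (hq t ht)) a
    (mem_closedBall_self (le_of_lt hρ))

end LineSubharmonic

/-- The sup-convolution of `f` with the cone `-L * dist x y`, i.e. the least `L`-Lipschitz majorant
of `f`. It regularizes plurisubharmonic functions without integration. -/
noncomputable def supConvolution {X : Type*} [PseudoMetricSpace X] (L : NNReal) (f : X → ℝ)
    (x : X) : ℝ :=
  ⨆ y, f y - L * dist x y

section SupConvolution

variable {X : Type*} [PseudoMetricSpace X] {L : NNReal} {f : X → ℝ} {b : ℝ}

lemma sub_mul_dist_le_supConvolution (hf : ∀ x, f x ≤ b) (x y : X) :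
    f y - L * dist x y ≤ supConvolution L f x :=
  le_ciSup (f := fun y => f y - L * dist x y) ⟨b, by
    rintro _ ⟨y, rfl⟩
    linarith [hf y, mul_nonneg L.coe_nonneg (dist_nonneg (x := x) (y := y))]⟩ y

lemma le_supConvolution (hf : ∀ x, f x ≤ b) (x : X) : f x ≤ supConvolution L f x := by
  simpa using sub_mul_dist_le_supConvolution (L := L) hf x x

lemma lipschitzWith_supConvolution (hf : ∀ x, f x ≤ b) :
    LipschitzWith L (supConvolution L f) := by
  refine .of_le_add_mul L fun x y => ?_
  have : Nonempty X := ⟨x⟩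
  refine ciSup_le fun s => ?_
  have htri := mul_le_mul_of_nonneg_left (dist_triangle_left y s x) L.coe_nonneg
  linarith [sub_mul_dist_le_supConvolution (L := L) hf y s]

lemma supConvolution_le_of_forall_dist_lt {x : X} {m η : ℝ} (hf : ∀ y, f y ≤ 0)
    (hm : m ≤ L * η) (h : ∀ y, dist y x < η → f y ≤ -m) : supConvolution L f x ≤ -m := by
  have : Nonempty X := ⟨x⟩
  refine ciSup_le fun y => ?_
  rw [dist_comm]
  rcases lt_or_ge (dist y x) η with hy | hy
  · linarith [h y hy, mul_nonneg L.coe_nonneg (dist_nonneg (x := y) (y := x))]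
  · linarith [hf y, mul_le_mul_of_nonneg_left hy L.coe_nonneg]

-- Competing points farther than `r` away never win, so only translates by vectors of norm at
-- most `r` matter.
lemma isLUB_supConvolution_of_bounded {E : Type*} [SeminormedAddCommGroup E] {ψ : E → ℝ}
    {r m : ℝ} (hr : 0 ≤ r) (hψ0 : ∀ x, ψ x ≤ 0) (hψm : ∀ x, -m ≤ ψ x) (hm : m ≤ L * r)
    (x : E) :
    IsLUB (range fun v : closedBall (0 : E) r => ψ (x + v) - L * ‖(v : E)‖)
      (supConvolution L ψ x) := by
  constructor
  · rintro _ ⟨v, rfl⟩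
    simpa using sub_mul_dist_le_supConvolution (L := L) hψ0 x (x + v)
  · intro b hb
    refine ciSup_le fun y => ?_
    rcases le_or_gt ‖y - x‖ r with hy | hy
    · have := hb ⟨⟨y - x, by simpa using hy⟩, rfl⟩
      simpa [dist_comm x, dist_eq_norm] using this
    · have hx : ψ x ≤ b := by simpa using hb ⟨⟨0, by simpa using hr⟩, rfl⟩
      rw [dist_comm, dist_eq_norm]
      linarith [hψ0 y, hψm x, mul_le_mul_of_nonneg_left hy.le L.coe_nonneg]

end SupConvolution

/-- The value of `t` clamped to the interval `[-m, 0]`, for `0 ≤ m`. -/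
noncomputable def clampNonpos (m : ℝ) (t : EReal) : ℝ :=
  (max (min t 0) ((-m : ℝ) : EReal)).toReal

section Clamp

variable {m b : ℝ} {t : EReal}

lemma coe_clampNonpos (hm : 0 ≤ m) (t : EReal) :
    (clampNonpos m t : EReal) = max (min t 0) ((-m : ℝ) : EReal) := by
  refine EReal.coe_toReal (ne_top_of_le_ne_top EReal.zero_ne_top ?_)
    (ne_bot_of_le_ne_bot (EReal.coe_ne_bot (-m)) (le_max_right _ _))
  exact max_le (min_le_right _ _) (by exact_mod_cast neg_nonpos.2 hm)

lemma clampNonpos_nonpos (hm : 0 ≤ m) (t : EReal) : clampNonpos m t ≤ 0 := by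
  rw [← EReal.coe_nonpos, coe_clampNonpos hm]
  exact max_le (min_le_right _ _) (by exact_mod_cast neg_nonpos.2 hm)

lemma neg_le_clampNonpos (hm : 0 ≤ m) (t : EReal) : -m ≤ clampNonpos m t := by
  rw [← EReal.coe_le_coe_iff, coe_clampNonpos hm]
  exact le_max_right _ _

lemma clampNonpos_le_iff (hm : 0 ≤ m) (ht : t ≤ 0) :
    clampNonpos m t ≤ b ↔ t ≤ b ∧ -m ≤ b := by
  rw [← EReal.coe_le_coe_iff, coe_clampNonpos hm, min_eq_left ht, max_le_iff,
    EReal.coe_le_coe_iff]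

end Clamp

section Regularization

variable {E : Type*} [NormedAddCommGroup E] [NormedSpace ℂ E] {U V : Set E}

lemma PlurisubharmonicOn.lineSubharmonicOn_clampNonpos {φ : E → EReal} {m : ℝ} (hm : 0 ≤ m)
    (hφ : PlurisubharmonicOn φ U) (hneg : ∀ x ∈ U, φ x ≤ 0) :
    LineSubharmonicOn (fun x => clampNonpos m (φ x)) U := by
  intro z w c r hr hU p hp t ht
  have hp' (s) (hs : s ∈ sphere c r) :=
    (clampNonpos_le_iff hm (hneg _ (hU s (sphere_subset_closedBall hs)))).1 (hp s hs)
  exact (clampNonpos_le_iff hm (hneg _ (hU t ht))).2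
    ⟨(hφ.2 z w).2 c r hr hU p (fun s hs => (hp' s hs).1) t ht,
      le_re_eval_of_le_sphere hr (fun s hs => (hp' s hs).2) t ht⟩

lemma LineSubharmonicOn.supConvolution {ψ : E → ℝ} {L : NNReal} {r m : ℝ}
    (hψ : LineSubharmonicOn ψ V) (hr : 0 ≤ r) (hUV : ∀ x ∈ U, closedBall x r ⊆ V)
    (hψ0 : ∀ x, ψ x ≤ 0) (hψm : ∀ x, -m ≤ ψ x) (hm : m ≤ L * r) :
    LineSubharmonicOn (supConvolution L ψ) U :=
  .of_isLUB (fun v : closedBall (0 : E) r => (hψ.comp_add_right fun x hx =>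
      hUV x hx (by simpa using mem_closedBall_zero_iff.1 v.2)).add_const (-(L * ‖(v : E)‖)))
    fun x _ => isLUB_supConvolution_of_bounded hr hψ0 hψm hm x

end Regularization

lemma isOpen_setOf_mem_and_lt_of_upperSemicontinuousOn {α β : Type*} [TopologicalSpace α]
    [Preorder β] {f : α → β} {s : Set α} (hf : UpperSemicontinuousOn f s) (hs : IsOpen s) (b : β) :
    IsOpen {x ∈ s | f x < b} := by
  obtain ⟨u, hu, h⟩ := upperSemicontinuousOn_iff_preimage_Iio.1 hf b
  have heq : {x ∈ s | f x < b} = s ∩ u := h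
  exact heq ▸ hs.inter hu

section Well

variable {E : Type*} [NormedAddCommGroup E] [NormedSpace ℂ E] {K B D : Set E} {f g : E → ℝ}
  {m : ℝ}

/-- `φ` is a nonpositive plurisubharmonic function on `B` whose `-∞`-set is `K ∩ B`. -/
structure IsPoleFunction (φ : E → EReal) (K B : Set E) : Prop where
  plurisubharmonicOn : PlurisubharmonicOn φ B
  nonpos : ∀ x ∈ B, φ x ≤ 0
  mem_iff_eq_bot : ∀ x ∈ B, x ∈ K ↔ φ x = ⊥

lemma PlurisubharmonicOn.mono {φ : E → EReal} {U V : Set E} (hφ : PlurisubharmonicOn φ V)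
    (hUV : U ⊆ V) : PlurisubharmonicOn φ U :=
  ⟨hφ.1.mono hUV, fun z w => ⟨(hφ.2 z w).1.mono fun _ ht => hUV ht,
    fun c r hr hsub => (hφ.2 z w).2 c r hr (hsub.trans fun _ ht => hUV ht)⟩⟩

lemma CompletePluripolarIn.exists_isPoleFunction {S : Set E} (hK : CompletePluripolarIn K S)
    {x : E} (hx : x ∈ K) : ∃ B, IsOpen B ∧ x ∈ B ∧ ∃ φ, IsPoleFunction φ K B := by
  obtain ⟨U, hU, hxU, -, φ, hφ, hKU⟩ := hK x hx
  have hpole : ∀ y ∈ U, y ∈ K ↔ φ y = ⊥ := fun y hy => by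
    simpa [hy] using Set.ext_iff.1 hKU y
  refine ⟨{y ∈ U | φ y < 0}, isOpen_setOf_mem_and_lt_of_upperSemicontinuousOn hφ.1 hU 0,
    ⟨hxU, ?_⟩, φ, hφ.mono (sep_subset _ _), fun y hy => hy.2.le, fun y hy => hpole y hy.1⟩
  rw [(hpole x hxU).1 hx]
  exact EReal.bot_lt_zero

/-- A well of depth `m` along `K` in `D`: a continuous nonpositive function, subharmonic along
the complex lines in `D`, that is at most `-m` on `K ∩ D`. -/
structure IsWell (K D : Set E) (m : ℝ) (f : E → ℝ) : Prop where
  continuous : Continuous f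
  nonpos : ∀ x, f x ≤ 0
  lineSubharmonicOn : LineSubharmonicOn f D
  le_neg : ∀ x ∈ K ∩ D, f x ≤ -m

lemma isWell_const (hm : 0 ≤ m) : IsWell K D m fun _ => -m :=
  ⟨continuous_const, fun _ => neg_nonpos.2 hm, lineSubharmonicOn_const _ D, fun _ _ => le_rfl⟩

lemma IsWell.max (hf : IsWell K D m f) (hg : IsWell K D m g) :
    IsWell K D m fun x => max (f x) (g x) :=
  ⟨hf.continuous.max hg.continuous, fun x => max_le (hf.nonpos x) (hg.nonpos x),
    hf.lineSubharmonicOn.max hg.lineSubharmonicOn,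
    fun x hx => max_le (hf.le_neg x hx) (hg.le_neg x hx)⟩

lemma IsWell.mono {k : ℝ} (hf : IsWell K D m f) (hkm : k ≤ m) : IsWell K D k f :=
  { hf with le_neg := fun x hx => (hf.le_neg x hx).trans (neg_le_neg hkm) }

lemma IsWell.sub_const {b : ℝ} (hf : IsWell K D m f) (hb : 0 ≤ b) :
    IsWell K D (m + b) fun x => f x + -b where
  continuous := hf.continuous.add_const _
  nonpos x := by linarith [hf.nonpos x]
  lineSubharmonicOn := hf.lineSubharmonicOn.add_const _
  le_neg x hx := by linarith [hf.le_neg x hx]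

lemma IsWell.const_mul {a : ℝ} (hf : IsWell K D m f) (ha : 0 < a) :
    IsWell K D (a * m) fun x => a * f x where
  continuous := hf.continuous.const_mul a
  nonpos x := mul_nonpos_of_nonneg_of_nonpos ha.le (hf.nonpos x)
  lineSubharmonicOn := hf.lineSubharmonicOn.const_mul ha
  le_neg x hx := by
    rw [← mul_neg]
    exact mul_le_mul_of_nonneg_left (hf.le_neg x hx) ha.le

lemma IsPoleFunction.exists_isWell_ge {φ : E → EReal} {ρ : ℝ} (hφ : IsPoleFunction φ K B)
    (hK : IsCompact K) (hB : IsOpen B) (hD : IsClosed D) (hρ : 0 < ρ)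
    (hDB : ∀ x ∈ D, closedBall x ρ ⊆ B) (hm : 0 ≤ m) :
    ∃ f, IsWell K D m f ∧ ∀ x ∈ D, φ x ≤ f x := by
  have hDB' : D ⊆ B := fun x hx => hDB x hx (mem_closedBall_self hρ.le)
  set ψ : E → ℝ := fun x => clampNonpos m (φ x)
  have hψ0 (x) : ψ x ≤ 0 := clampNonpos_nonpos hm _
  obtain ⟨η, hη, hthick⟩ := (hK.inter_right hD).exists_thickening_subset_open
    (isOpen_setOf_mem_and_lt_of_upperSemicontinuousOn hφ.plurisubharmonicOn.1 hB ((-m : ℝ) : EReal))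
    (fun x hx => ⟨hDB' hx.2,
      (hφ.mem_iff_eq_bot x (hDB' hx.2)).1 hx.1 ▸ EReal.bot_lt_coe (-m)⟩)
  have hnear {x y} (hx : x ∈ K ∩ D) (hyx : dist y x < η) : ψ y ≤ -m := by
    obtain ⟨hyB, hy⟩ := hthick (mem_thickening_iff.2 ⟨x, hx, hyx⟩)
    exact (clampNonpos_le_iff hm (hφ.nonpos y hyB)).2 ⟨hy.le, le_rfl⟩
  set L : NNReal := ⟨max (m / ρ) (m / η), by positivity⟩
  have hLρ : m ≤ L * ρ := (div_le_iff₀ hρ).1 (le_max_left _ _)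
  have hLη : m ≤ L * η := (div_le_iff₀ hη).1 (le_max_right _ _)
  refine ⟨supConvolution L ψ, ⟨(lipschitzWith_supConvolution hψ0).continuous, fun x => ?_, ?_,
    fun x hx => ?_⟩, fun x hx => ?_⟩
  · exact ciSup_le fun y => by
      linarith [hψ0 y, mul_nonneg L.coe_nonneg (dist_nonneg (x := x) (y := y))]
  · exact (hφ.plurisubharmonicOn.lineSubharmonicOn_clampNonpos hm hφ.nonpos).supConvolution
      hρ.le hDB hψ0 (fun x => neg_le_clampNonpos hm _) hLρ
  · exact supConvolution_le_of_forall_dist_lt hψ0 hLη fun y => hnear hx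
  · exact ((clampNonpos_le_iff hm (hφ.nonpos x (hDB' hx))).1 (le_supConvolution hψ0 x)).1

lemma IsPoleFunction.exists_isWell_gt_neg_one {φ : E → EReal} {ρ : ℝ} {z : E}
    (hφ : IsPoleFunction φ K B) (hK : IsCompact K) (hB : IsOpen B) (hD : IsClosed D) (hρ : 0 < ρ)
    (hDB : ∀ x ∈ D, closedBall x ρ ⊆ B) (hm : 0 ≤ m) (hz : z ∈ D) (hzK : z ∉ K) :
    ∃ s, IsWell K D m s ∧ -1 < s z := by
  have hzB : z ∈ B := hDB z hz (mem_closedBall_self hρ.le)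
  obtain ⟨b, hb⟩ : ∃ b : ℝ, (b : EReal) = φ z :=
    ⟨(φ z).toReal, EReal.coe_toReal (ne_top_of_le_ne_top EReal.zero_ne_top (hφ.nonpos z hzB))
      fun h => hzK ((hφ.mem_iff_eq_bot z hzB).2 h)⟩
  have hb0 : b ≤ 0 := EReal.coe_nonpos.1 (hb ▸ hφ.nonpos z hzB)
  have hpos : 0 < 1 - b := by linarith
  obtain ⟨f, hf, hφf⟩ := hφ.exists_isWell_ge hK hB hD hρ hDB (mul_nonneg hpos.le hm)
  have hbf : b ≤ f z := EReal.coe_le_coe_iff.1 (hb ▸ hφf z hz)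
  refine ⟨fun x => (1 - b)⁻¹ * f x, ?_, ?_⟩
  · simpa [hpos.ne'] using hf.const_mul (inv_pos.2 hpos)
  · rw [lt_inv_mul_iff₀ hpos]
    linarith

/-- In `D`, the set `K` has wells of arbitrary depth that stay above `-1` on any prescribed
compact set disjoint from `K`. This is what remains of complete pluripolarity after continuous
regularization. -/
def HasDeepWells (K D : Set E) : Prop :=
  ∀ m ≥ 0, ∀ L ⊆ D, IsCompact L → Disjoint L K → ∃ s, IsWell K D m s ∧ ∀ x ∈ L, -1 ≤ s x

lemma hasDeepWells_of_forall_notMem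
    (h : ∀ m ≥ 0, ∀ z ∈ D, z ∉ K → ∃ s, IsWell K D m s ∧ -1 < s z) : HasDeepWells K D := by
  intro m hm L hLD hL hLK
  refine hL.induction_on (p := fun A => ∃ s, IsWell K D m s ∧ ∀ x ∈ A, -1 ≤ s x)
    ⟨_, isWell_const hm, by simp⟩ ?_ ?_ ?_
  · rintro A A' hAA' ⟨s, hs, hsA'⟩
    exact ⟨s, hs, fun x hx => hsA' x (hAA' hx)⟩
  · rintro A A' ⟨s, hs, hsA⟩ ⟨s', hs', hsA'⟩
    refine ⟨_, hs.max hs', ?_⟩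
    rintro x (hx | hx)
    · exact le_max_of_le_left (hsA x hx)
    · exact le_max_of_le_right (hsA' x hx)
  · intro z hz
    obtain ⟨s, hs, hsz⟩ := h m hm z (hLD hz) (disjoint_left.1 hLK hz)
    exact ⟨{x | -1 < s x}, mem_nhdsWithin_of_mem_nhds
      ((isOpen_lt continuous_const hs.continuous).mem_nhds hsz), s, hs, fun x hx => le_of_lt hx⟩

lemma hasDeepWells_of_disjoint (h : Disjoint K D) : HasDeepWells K D :=
  fun _ _ _ _ _ _ => ⟨fun _ => 0, ⟨continuous_const, fun _ => le_rfl, lineSubharmonicOn_const 0 D,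
    fun _ hx => (disjoint_left.1 h hx.1 hx.2).elim⟩, by simp⟩

lemma CompletePluripolarIn.exists_radius_hasDeepWells {S : Set E} (hKS : CompletePluripolarIn K S)
    (hK : IsCompact K) : ∃ r > 0, ∀ a, HasDeepWells K (closedBall a r) := by
  choose! B hBo hxB φ hφ using fun x hx => hKS.exists_isPoleFunction (x := x) hx
  obtain ⟨δ, hδ, hlebesgue⟩ := lebesgue_number_lemma_of_metric (c := fun x : K => B x) hK
    (fun x => hBo x x.2) fun x hx => mem_iUnion.2 ⟨⟨x, hx⟩, hxB x hx⟩
  refine ⟨δ / 4, by positivity, fun a => ?_⟩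
  by_cases hdisj : Disjoint K (closedBall a (δ / 4))
  · exact hasDeepWells_of_disjoint hdisj
  obtain ⟨x, hxK, hxa⟩ := not_disjoint_iff.1 hdisj
  obtain ⟨i, hi⟩ := hlebesgue x hxK
  have hball : ∀ y ∈ closedBall a (δ / 4), closedBall y (δ / 4) ⊆ B i := by
    intro y hy
    refine (closedBall_subset_ball' ?_).trans hi
    have := dist_triangle_right y x a
    linarith [mem_closedBall.1 hy, mem_closedBall.1 hxa]
  exact hasDeepWells_of_forall_notMem fun m hm z hz hzK =>
    (hφ i i.2).exists_isWell_gt_neg_one hK (hBo i i.2) isClosed_closedBall (by positivity) hball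
      hm hz hzK

end Well

section ComparableFamily

variable {E : Type*} [NormedAddCommGroup E] [NormedSpace ℂ E] {ι : Type*} {K N : Set E}
  {D : ι → Set E} {M : ℝ} {s v : ι → E → ℝ}

/-- Wells of depth exactly `M` along `K` in the sets `D i`. Any two of them differ by at most `2`
where both are defined, however large `M` is. -/
structure IsComparableFamily (K : Set E) (D : ι → Set E) (M : ℝ) (v : ι → E → ℝ) : Prop where
  isWell : ∀ i, IsWell K (D i) M (v i)
  neg_le : ∀ i x, -M ≤ v i x
  le_add_two : ∀ i j, ∀ x ∈ D i ∩ D j, v i x ≤ v j x + 2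

lemma isComparableFamily_zero (K : Set E) (D : ι → Set E) :
    IsComparableFamily K D 0 fun _ _ => 0 where
  isWell _ := by simpa using isWell_const (K := K) le_rfl
  neg_le := by simp
  le_add_two := by simp

lemma IsComparableFamily.max_add_neg_one (hv : IsComparableFamily K D M v)
    (hs : ∀ i, IsWell K (D i) (M + 1) (s i))
    (hsv : ∀ i j, ∀ x ∈ D i ∩ D j, s i x ≤ -(M + 1) ∨ -1 ≤ v j x) :
    IsComparableFamily K D (M + 1) fun i x => max (s i x) (v i x + -1) where
  isWell i := (hs i).max ((hv.isWell i).sub_const zero_le_one)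
  neg_le i x := le_max_of_le_right (by linarith [hv.neg_le i x])
  le_add_two i j x hx := by
    have hvj : v j x + -1 ≤ max (s j x) (v j x + -1) := le_max_right _ _
    refine max_le ?_ (by linarith [hv.le_add_two i j x hx])
    rcases hsv i j x hx with h | h
    · linarith [hv.neg_le j x]
    · linarith [(hs i).nonpos x]

lemma exists_isComparableFamily [Finite ι] (hD : ∀ i, IsCompact (D i))
    (hwell : ∀ i, HasDeepWells K (D i)) (M : ℕ) (hN : IsOpen N) (hKN : K ⊆ N) :
    ∃ v, IsComparableFamily K D M v ∧ ∀ i, ∀ x ∈ D i \ N, -1 ≤ v i x := by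
  induction M generalizing N with
  | zero => exact ⟨_, by simpa using isComparableFamily_zero K D, by simp⟩
  | succ M ih =>
    choose s hs hsN using fun i => hwell i (M + 2) (by positivity) (D i \ N) sdiff_subset
      ((hD i).diff hN) (disjoint_sdiff_left.mono_right hKN)
    set N' : Set E := ⋂ i, ({x | s i x < -(M + 1 : ℝ)} ∪ (D i)ᶜ)
    have hN' : IsOpen N' := isOpen_iInter_of_finite fun i =>
      (isOpen_lt (hs i).continuous continuous_const).union (hD i).isClosed.isOpen_compl
    have hKN' : K ⊆ N' := fun x hx => mem_iInter.2 fun i => or_iff_not_imp_right.2 fun hxi =>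
      ((hs i).le_neg x ⟨hx, not_notMem.1 hxi⟩).trans_lt (by linarith)
    obtain ⟨v, hv, hvN'⟩ := ih hN' hKN'
    refine ⟨fun i x => max (s i x) (v i x + -1), ?_, fun i x hx => le_max_of_le_left (hsN i x hx)⟩
    push_cast
    refine hv.max_add_neg_one (fun i => (hs i).mono (by linarith)) fun i j x hx => ?_
    by_cases hxN' : x ∈ N'
    · exact .inl (le_of_lt ((mem_iInter.1 hxN' i).resolve_right (not_notMem.2 hx.1)))
    · exact .inr (hvN' j x ⟨hx.2, hxN'⟩)

end ComparableFamily

/-- The penalty added near a centre before taking maxima of local functions. The quadratic term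
makes the penalty at distance `r / 2` exceed the one at distance `r / 4` by more than the
discrepancy `2` of a comparable family; the second term, which vanishes up to distance `r / 2`,
beats every function with values in `[-M, 0]` from distance `r` on. -/
noncomputable def gluingWeight {E : Type*} [SeminormedAddCommGroup E] (r M : ℝ) (y : E) : ℝ :=
  -(16 / r ^ 2 * ‖y‖ ^ 2) - 2 * M / r ^ 2 * max 0 (‖y‖ ^ 2 - r ^ 2 / 4)

section GluingWeight

variable {E : Type*} [SeminormedAddCommGroup E] {r M : ℝ} {y : E}

lemma gluingWeight_le (hM : 0 ≤ M) : gluingWeight r M y ≤ -(16 / r ^ 2 * ‖y‖ ^ 2) :=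
  sub_le_self _ (by positivity)

lemma gluingWeight_of_norm_le_half (hy : ‖y‖ ≤ r / 2) :
    gluingWeight r M y = -(16 / r ^ 2 * ‖y‖ ^ 2) := by
  have hy' : ‖y‖ ^ 2 ≤ (r / 2) ^ 2 := pow_le_pow_left₀ (norm_nonneg y) hy 2
  rw [gluingWeight, max_eq_left (by linarith), mul_zero, sub_zero]

lemma neg_one_le_gluingWeight (hr : 0 < r) (hy : ‖y‖ ≤ r / 4) : -1 ≤ gluingWeight r M y := by
  have hy' : ‖y‖ ^ 2 ≤ (r / 4) ^ 2 := pow_le_pow_left₀ (norm_nonneg y) hy 2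
  rw [gluingWeight_of_norm_le_half (by linarith), neg_le_neg_iff, div_mul_eq_mul_div,
    div_le_one (by positivity)]
  linarith

lemma gluingWeight_le_neg_four (hr : 0 < r) (hM : 0 ≤ M) (hy : r / 2 ≤ ‖y‖) :
    gluingWeight r M y ≤ -4 := by
  have hy' : (r / 2) ^ 2 ≤ ‖y‖ ^ 2 := pow_le_pow_left₀ (by positivity) hy 2
  refine (gluingWeight_le hM).trans (neg_le_neg ?_)
  rw [div_mul_eq_mul_div, le_div_iff₀ (by positivity)]
  linarith

lemma gluingWeight_lt_neg_sub_one (hr : 0 < r) (hM : 0 ≤ M) (hy : r ≤ ‖y‖) :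
    gluingWeight r M y < -M - 1 := by
  have hy' : r ^ 2 ≤ ‖y‖ ^ 2 := pow_le_pow_left₀ hr.le hy 2
  have hquad : 1 < 16 / r ^ 2 * ‖y‖ ^ 2 := by
    rw [div_mul_eq_mul_div, lt_div_iff₀ (by positivity)]
    linarith [pow_pos hr 2]
  have hdeep : M ≤ 2 * M / r ^ 2 * max 0 (‖y‖ ^ 2 - r ^ 2 / 4) := by
    rw [div_mul_eq_mul_div, le_div_iff₀ (by positivity)]
    nlinarith [le_max_right 0 (‖y‖ ^ 2 - r ^ 2 / 4)]
  rw [gluingWeight]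
  linarith

@[fun_prop]
lemma continuous_gluingWeight : Continuous (gluingWeight r M : E → ℝ) := by
  unfold gluingWeight
  fun_prop

end GluingWeight

/-- The maximum of the functions `v i`, penalized away from the centres `c i`. The summand
`16 / r ^ 2 * ‖x‖ ^ 2` turns the active penalties into pluriharmonic functions. -/
noncomputable def glue {E ι : Type*} [SeminormedAddCommGroup E] [Fintype ι] [Nonempty ι]
    (r M : ℝ) (c : ι → E) (v : ι → E → ℝ) (x : E) : ℝ :=
  Finset.univ.sup' Finset.univ_nonempty (fun i => v i x + gluingWeight r M (x - c i))
    + 16 / r ^ 2 * ‖x‖ ^ 2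

section Glue

variable {E : Type*} [SeminormedAddCommGroup E] {ι : Type*} [Fintype ι] [Nonempty ι]
  {c : ι → E} {r M : ℝ} {v : ι → E → ℝ} {x : E} {i : ι}

lemma continuous_glue (hv : ∀ i, Continuous (v i)) : Continuous (glue r M c v) :=
  (Continuous.finset_sup'_apply _ fun i _ =>
    (hv i).add (continuous_gluingWeight.comp (by fun_prop))).add (by fun_prop)

lemma le_glue_of_norm_sub_le_half (hx : ‖x - c i‖ ≤ r / 2) :
    v i x + 16 / r ^ 2 * (‖x‖ ^ 2 - ‖x - c i‖ ^ 2) ≤ glue r M c v x := by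
  have hle := Finset.le_sup' (fun i => v i x + gluingWeight r M (x - c i)) (Finset.mem_univ i)
  rw [gluingWeight_of_norm_le_half hx] at hle
  unfold glue
  linarith

lemma sub_one_le_glue (hr : 0 < r) (hx : ‖x - c i‖ ≤ r / 4) : v i x - 1 ≤ glue r M c v x := by
  have hle := Finset.le_sup' (fun i => v i x + gluingWeight r M (x - c i)) (Finset.mem_univ i)
  have hsq : 0 ≤ 16 / r ^ 2 * ‖x‖ ^ 2 := by positivity
  unfold glue
  linarith [neg_one_le_gluingWeight (M := M) hr hx]

end Glue

section GlueComparable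

variable {E : Type*} [NormedAddCommGroup E] [NormedSpace ℂ E] {ι : Type*} {K : Set E}
  {c : ι → E} {r M : ℝ} {v : ι → E → ℝ} {x : E} {i j : ι}

lemma IsComparableFamily.add_gluingWeight_lt
    (hv : IsComparableFamily K (fun i => closedBall (c i) r) M v) (hr : 0 < r) (hM : 0 ≤ M)
    (hi : r / 2 ≤ ‖x - c i‖) (hj : ‖x - c j‖ ≤ r / 4) :
    v i x + gluingWeight r M (x - c i) < v j x + gluingWeight r M (x - c j) := by
  have hwj := neg_one_le_gluingWeight (M := M) hr hj
  rcases le_total ‖x - c i‖ r with hir | hir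
  · have hij := hv.le_add_two i j x
      ⟨mem_closedBall_iff_norm.2 hir, mem_closedBall_iff_norm.2 (by linarith)⟩
    linarith [gluingWeight_le_neg_four hr hM hi]
  · linarith [(hv.isWell i).nonpos x, hv.neg_le j x, gluingWeight_lt_neg_sub_one hr hM hir]

lemma IsComparableFamily.exists_glue_eq [Fintype ι] [Nonempty ι]
    (hv : IsComparableFamily K (fun i => closedBall (c i) r) M v) (hr : 0 < r) (hM : 0 ≤ M)
    (hj : ‖x - c j‖ ≤ r / 4) :
    ∃ i, ‖x - c i‖ < r / 2 ∧
      glue r M c v x = v i x + 16 / r ^ 2 * (‖x‖ ^ 2 - ‖x - c i‖ ^ 2) := by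
  obtain ⟨i, -, hi⟩ := Finset.exists_mem_eq_sup' Finset.univ_nonempty
    fun i => v i x + gluingWeight r M (x - c i)
  have hxi : ‖x - c i‖ < r / 2 := by
    by_contra! hfar
    refine (hv.add_gluingWeight_lt hr hM hfar hj).not_ge ?_
    exact hi ▸ Finset.le_sup' (fun i => v i x + gluingWeight r M (x - c i)) (Finset.mem_univ j)
  refine ⟨i, hxi, ?_⟩
  rw [glue, hi, gluingWeight_of_norm_le_half hxi.le]
  ring

lemma IsComparableFamily.exists_glue_le [Fintype ι] [Nonempty ι]
    (hv : IsComparableFamily K (fun i => closedBall (c i) r) M v) (hr : 0 < r) (hM : 0 ≤ M)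
    (hj : ‖x - c j‖ ≤ r / 4) :
    ∃ i, x ∈ closedBall (c i) r ∧ glue r M c v x ≤ v i x + 16 / r ^ 2 * ‖x‖ ^ 2 := by
  obtain ⟨i, hxi, hglue⟩ := hv.exists_glue_eq hr hM hj
  refine ⟨i, mem_closedBall_iff_norm.2 (by linarith), hglue.trans_le ?_⟩
  gcongr
  exact sub_le_self _ (by positivity)

end GlueComparable

section InnerProduct

variable {E : Type*} [NormedAddCommGroup E] [InnerProductSpace ℂ E]

lemma exists_polynomial_re_eq_norm_sq_sub_norm_sub_sq (b : ℝ) (a z w : E) :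
    ∃ q : Polynomial ℂ, ∀ t : ℂ,
      b * (‖z + t • w‖ ^ 2 - ‖z + t • w - a‖ ^ 2) = (q.eval t).re := by
  refine ⟨.C (2 * b * inner ℂ a w) * .X + .C ((b : ℂ) * (2 * inner ℂ a z - (‖a‖ ^ 2 : ℝ))),
    fun t => ?_⟩
  rw [norm_sub_sq (𝕜 := ℂ), inner_re_symm]
  simp only [inner_add_right, inner_smul_right, Polynomial.eval_add, Polynomial.eval_mul,
    Polynomial.eval_C, Polynomial.eval_X, RCLike.re_to_complex, add_re, sub_re, mul_re, mul_im,
    sub_im, ofReal_re, ofReal_im, re_ofNat, im_ofNat]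
  ring

variable {ι : Type*} [Fintype ι] [Nonempty ι] {K U : Set E} {c : ι → E} {r M : ℝ}
  {v : ι → E → ℝ}

lemma IsComparableFamily.lineSubharmonicOn_glue
    (hv : IsComparableFamily K (fun i => closedBall (c i) r) M v) (hr : 0 < r) (hM : 0 ≤ M)
    (hU : ∀ x ∈ U, ∃ j, ‖x - c j‖ ≤ r / 4) : LineSubharmonicOn (glue r M c v) U := by
  refine .of_supporting (continuous_glue fun i => (hv.isWell i).continuous).continuousOn
    fun x hx => ?_
  obtain ⟨j, hj⟩ := hU x hx
  obtain ⟨i, hi, hglue⟩ := hv.exists_glue_eq hr hM hj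
  refine ⟨fun y => v i y + 16 / r ^ 2 * (‖y‖ ^ 2 - ‖y - c i‖ ^ 2), ball (c i) (r / 2),
    isOpen_ball.mem_nhds (mem_ball_iff_norm.2 hi), ?_, fun y hy => ?_, hglue.symm⟩
  · refine ((hv.isWell i).lineSubharmonicOn.mono ?_).add_of_re_polynomial
      (exists_polynomial_re_eq_norm_sq_sub_norm_sub_sq _ _)
    exact ball_subset_closedBall.trans (closedBall_subset_closedBall (by linarith))
  · exact le_glue_of_norm_sub_le_half (mem_ball_iff_norm.1 hy).le

end InnerProduct

/-- The competitors in the definition of the relative extremal function of `K` in `Ω`. -/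
structure IsCompetitor {E : Type*} [NormedAddCommGroup E] [NormedSpace ℂ E] (Ω K : Set E)
    (u : E → ℝ) : Prop where
  plurisubharmonicOn : PlurisubharmonicOn (fun w => (u w : EReal)) Ω
  continuousOn : ContinuousOn u Ω
  lt_one : ∀ w ∈ Ω, u w < 1
  nonpos : ∀ w ∈ K, u w ≤ 0

lemma isCompetitor_iff {E : Type*} [NormedAddCommGroup E] [NormedSpace ℂ E] {Ω K : Set E}
    {u : E → ℝ} : IsCompetitor Ω K u ↔ PlurisubharmonicOn (fun w => (u w : EReal)) Ω ∧
      ContinuousOn u Ω ∧ (∀ w ∈ Ω, u w < 1) ∧ ∀ w ∈ K, u w ≤ 0 :=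
  ⟨fun ⟨h₁, h₂, h₃, h₄⟩ => ⟨h₁, h₂, h₃, h₄⟩, fun ⟨h₁, h₂, h₃, h₄⟩ => ⟨h₁, h₂, h₃, h₄⟩⟩

/-- The relative extremal function `u_K` of `K` in `Ω`. The supremum is a junk value outside `Ω`,
where competitors are unconstrained. -/
noncomputable def relativeExtremalFunction {E : Type*} [NormedAddCommGroup E] [NormedSpace ℂ E]
    (Ω K : Set E) (z : E) : ℝ :=
  sSup {t | ∃ u, IsCompetitor Ω K u ∧ t = u z}

section Competitor

variable {E : Type*} [NormedAddCommGroup E] [InnerProductSpace ℂ E] [ProperSpace E]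
  {Ω K S : Set E} {z : E}

lemma CompletePluripolarIn.exists_lineSubharmonicOn_le_sub (hKS : CompletePluripolarIn K S)
    (hK : IsCompact K) (hKΩ : K ⊆ Ω) (hΩ : Bornology.IsBounded Ω) (hz : z ∈ Ω) (hzK : z ∉ K) :
    ∃ C : ℝ, ∀ k : ℕ, ∃ G : E → ℝ, Continuous G ∧ LineSubharmonicOn G Ω ∧
      (∀ x ∈ Ω, G x ≤ C) ∧ (∀ x ∈ K, G x ≤ C - k) ∧ -2 ≤ G z := by
  obtain ⟨r, hr, hwell⟩ := hKS.exists_radius_hasDeepWells hK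
  obtain ⟨R, hR⟩ := hΩ.exists_norm_le
  have hRΩ : ∀ x ∈ Ω, 16 / r ^ 2 * ‖x‖ ^ 2 ≤ 16 / r ^ 2 * R ^ 2 := fun x hx => by
    gcongr
    exact hR x hx
  obtain ⟨I, -, hI, hΩI⟩ := exists_finite_cover_balls_of_isCompact_closure
    (ε := r / 4) hΩ.isCompact_closure (by positivity)
  have hcover : ∀ x ∈ Ω, ∃ j : I, ‖x - j‖ ≤ r / 4 := fun x hx => by
    obtain ⟨j, hj, hxj⟩ := mem_iUnion₂.1 (hΩI hx)
    exact ⟨⟨j, hj⟩, (mem_ball_iff_norm.1 hxj).le⟩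
  obtain ⟨j₀, hj₀⟩ := hcover z hz
  have : Fintype I := hI.fintype
  have : Nonempty I := ⟨j₀⟩
  refine ⟨16 / r ^ 2 * R ^ 2, fun k => ?_⟩
  obtain ⟨v, hv, hvz⟩ := exists_isComparableFamily (fun i : I => isCompact_closedBall (i : E) r)
    (fun i => hwell i) k isOpen_compl_singleton (subset_compl_singleton_iff.2 hzK)
  refine ⟨glue r k (fun i : I => (i : E)) v, continuous_glue fun i => (hv.isWell i).continuous,
    hv.lineSubharmonicOn_glue hr k.cast_nonneg hcover, fun x hx => ?_, fun x hx => ?_, ?_⟩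
  · obtain ⟨j, hj⟩ := hcover x hx
    obtain ⟨i, -, hle⟩ := hv.exists_glue_le hr k.cast_nonneg hj
    linarith [(hv.isWell i).nonpos x, hRΩ x hx]
  · obtain ⟨j, hj⟩ := hcover x (hKΩ hx)
    obtain ⟨i, hxi, hle⟩ := hv.exists_glue_le hr k.cast_nonneg hj
    linarith [(hv.isWell i).le_neg x ⟨hx, hxi⟩, hRΩ x (hKΩ hx)]
  · have hzj : z ∈ closedBall (j₀ : E) r := mem_closedBall_iff_norm.2 (by linarith)
    linarith [hvz j₀ z ⟨hzj, by simp⟩, sub_one_le_glue (M := k) (v := v) hr hj₀]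

lemma CompletePluripolarIn.exists_isCompetitor (hKS : CompletePluripolarIn K S)
    (hK : IsCompact K) (hKΩ : K ⊆ Ω) (hΩ : Bornology.IsBounded Ω) (hz : z ∈ Ω) (hzK : z ∉ K)
    {ε : ℝ} (hε : 0 < ε) : ∃ u, IsCompetitor Ω K u ∧ 1 - ε < u z := by
  obtain ⟨C, hC⟩ := hKS.exists_lineSubharmonicOn_le_sub hK hKΩ hΩ hz hzK
  obtain ⟨k, hk⟩ := exists_nat_gt ((C + 3) / ε)
  obtain ⟨G, hGc, hG, hGΩ, hGK, hGz⟩ := hC k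
  have hk0 : (0 : ℝ) < k := lt_trans (div_pos (by linarith [hGΩ z hz]) hε) hk
  refine ⟨fun x => (k : ℝ)⁻¹ * (G x + -(C + 1)) + 1, ⟨?_, by fun_prop, fun x hx => ?_,
    fun x hx => ?_⟩, ?_⟩
  · exact (((hG.add_const _).const_mul (inv_pos.2 hk0)).add_const 1).plurisubharmonicOn
      (by fun_prop)
  · have hneg : (k : ℝ)⁻¹ * (G x + -(C + 1)) < 0 :=
      mul_neg_of_pos_of_neg (inv_pos.2 hk0) (by linarith [hGΩ x hx])
    linarith
  · have hle : (k : ℝ)⁻¹ * (G x + -(C + 1)) ≤ -1 := by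
      rw [inv_mul_le_iff₀ hk0]
      linarith [hGK x hx]
    linarith
  · have hlt : -ε < (k : ℝ)⁻¹ * (G z + -(C + 1)) := by
      rw [lt_inv_mul_iff₀ hk0]
      linarith [(div_lt_iff₀ hε).1 hk]
    linarith

end Competitor

section Linear

variable {E F : Type*} [NormedAddCommGroup E] [NormedSpace ℂ E] [NormedAddCommGroup F]
  [NormedSpace ℂ F] {Ω K S : Set E}

lemma PlurisubharmonicOn.comp_continuousLinearMap {u : E → EReal} (hu : PlurisubharmonicOn u Ω)
    (T : F →L[ℂ] E) : PlurisubharmonicOn (fun x => u (T x)) (T ⁻¹' Ω) := by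
  refine ⟨hu.1.comp T.continuous.continuousOn (mapsTo_preimage T Ω), fun z w => ?_⟩
  simpa only [mem_preimage, map_add, map_smul] using hu.2 (T z) (T w)

lemma CompletePluripolarIn.preimage (hKS : CompletePluripolarIn K S) (T : F →L[ℂ] E) :
    CompletePluripolarIn (T ⁻¹' K) (T ⁻¹' S) := by
  intro x hx
  obtain ⟨U, hU, hxU, hUS, φ, hφ, hKU⟩ := hKS (T x) hx
  exact ⟨T ⁻¹' U, hU.preimage T.continuous, hxU, preimage_mono hUS, _,
    hφ.comp_continuousLinearMap T, congrArg (T ⁻¹' ·) hKU⟩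

lemma IsCompetitor.comp_continuousLinearMap {u : E → ℝ} (hu : IsCompetitor Ω K u)
    (T : F →L[ℂ] E) : IsCompetitor (T ⁻¹' Ω) (T ⁻¹' K) fun x => u (T x) where
  plurisubharmonicOn := hu.plurisubharmonicOn.comp_continuousLinearMap T
  continuousOn := hu.continuousOn.comp T.continuous.continuousOn (mapsTo_preimage T Ω)
  lt_one _ hx := hu.lt_one _ hx
  nonpos _ hx := hu.nonpos _ hx

lemma isCompetitor_zero (Ω K : Set E) : IsCompetitor Ω K fun _ => 0 where
  plurisubharmonicOn := (lineSubharmonicOn_const 0 Ω).plurisubharmonicOn continuousOn_const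
  continuousOn := continuousOn_const
  lt_one := by simp
  nonpos := by simp

variable [FiniteDimensional ℂ E]

lemma CompletePluripolarIn.exists_isCompetitor_of_finiteDimensional
    (hKS : CompletePluripolarIn K S) (hK : IsCompact K) (hKΩ : K ⊆ Ω)
    (hΩ : Bornology.IsBounded Ω) {z : E} (hz : z ∈ Ω) (hzK : z ∉ K) {ε : ℝ} (hε : 0 < ε) :
    ∃ u, IsCompetitor Ω K u ∧ 1 - ε < u z := by
  let T : E ≃L[ℂ] EuclideanSpace ℂ (Fin (Module.finrank ℂ E)) := .ofFinrankEq (by simp)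
  have hpp := hKS.preimage T.symm.toContinuousLinearMap
  have hKT : IsCompact (T.symm ⁻¹' K) := T.symm.toHomeomorph.isCompact_preimage.2 hK
  have hΩT : Bornology.IsBounded (T.symm ⁻¹' Ω) := by
    rw [← T.image_eq_preimage_symm]
    exact T.lipschitz.isBounded_image hΩ
  obtain ⟨u, hu, huz⟩ := hpp.exists_isCompetitor (z := T z) hKT (preimage_mono hKΩ) hΩT
    (by simpa using hz) (by simpa using hzK) hε
  have huT := hu.comp_continuousLinearMap T.toContinuousLinearMap
  refine ⟨fun x => u (T x), ?_, huz⟩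
  rw [← T.preimage_symm_preimage Ω, ← T.preimage_symm_preimage K]
  exact huT

theorem relative_extremal_eq_indicator_general (hΩ : Bornology.IsBounded Ω) (hK : IsCompact K)
    (hKΩ : K ⊆ Ω) (hKpp : CompletePluripolarIn K Ω) :
    ∀ z ∈ Ω, relativeExtremalFunction Ω K z = if z ∈ K then 0 else 1 := by
  intro z hz
  refine IsLUB.csSup_eq ⟨?_, fun b hb => ?_⟩ ⟨0, _, isCompetitor_zero Ω K, rfl⟩
  · rintro _ ⟨u, hu, rfl⟩
    split_ifs with hzK
    exacts [hu.nonpos z hzK, (hu.lt_one z hz).le]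
  · split_ifs with hzK
    · exact hb ⟨_, isCompetitor_zero Ω K, rfl⟩
    · refine le_of_forall_pos_sub_le fun ε hε => ?_
      obtain ⟨u, hu, huz⟩ :=
        hKpp.exists_isCompetitor_of_finiteDimensional hK hKΩ hΩ hz hzK hε
      exact huz.le.trans (hb ⟨u, hu, rfl⟩)

end Linear

/-- The relative extremal function of a compact complete pluripolar set `K` in a
bounded domain `Ω ⊆ ℂⁿ` equals the characteristic function of `Ω \ K`. -/
theorem relative_extremal_eq_indicator
    {n : ℕ} {Ω K : Set (Fin n → ℂ)}
    (hΩopen : IsOpen Ω) (hΩconn : IsConnected Ω) (hΩbdd : Bornology.IsBounded Ω)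
    (hKcpt : IsCompact K) (hKΩ : K ⊆ Ω) (hKpp : CompletePluripolarIn K Ω) :
    ∀ z ∈ Ω,
      sSup {t : ℝ | ∃ u : (Fin n → ℂ) → ℝ,
          PlurisubharmonicOn (fun w => (u w : EReal)) Ω ∧ ContinuousOn u Ω ∧
          (∀ w ∈ Ω, u w < 1) ∧ (∀ w ∈ K, u w ≤ 0) ∧ t = u z}
        = (if z ∈ K then 0 else 1) := by
  simpa only [relativeExtremalFunction, isCompetitor_iff, and_assoc] using
    relative_extremal_eq_indicator_general hΩbdd hKcpt hKΩ hKpp
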